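/- arXiv:1603.08917 — 2 statements merged into one kernel-verified Lean document; each statement's English description precedes it below -/
import Mathlib

section
/- For every natural number n ≥ 89 and every natural number i with 2 ≤ i ≤ n, (1 + log(1 + 1/n)/log n)^{n−(i−1)} · ((log log(n+1) − 1/2)/(log log n − 1/2))^{i−1} < log n. (Inequality (3.6).) -/
open Real

/-!
By the tangent-line bound `log (x + h) ≤ log x + h / x`, applied once to `log` and twice to
`log log`, the two bases are at most `1 + 1 / (x log x)` and
`1 + 1 / (x log x (log log x - 1/2))`. As soon as `log x ≥ e`, both are at most
`exp (2 / (x log x))`, so a product of at most `x` such factors is at most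
`exp (2 / log x) < e ≤ log x`.
-/

lemma log_add_le_log_add_div {x h : ℝ} (hx : 0 < x) (hxh : 0 < x + h) :
    log (x + h) ≤ log x + h / x := by
  have tangent : log ((x + h) / x) ≤ (x + h) / x - 1 := log_le_sub_one_of_pos (by positivity)
  rw [log_div hxh.ne' hx.ne', add_div, div_self hx.ne'] at tangent
  linarith

lemma log_one_add_inv_div_log_le {x : ℝ} (hx : 1 < x) :
    log (1 + 1 / x) / log x ≤ 1 / (x * log x) := by
  have hlog : 0 < log x := log_pos hx
  have tangent : log (1 + 1 / x) ≤ 1 / x := by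
    simpa using log_add_le_log_add_div one_pos (h := 1 / x) (by positivity)
  calc log (1 + 1 / x) / log x ≤ 1 / x / log x := by gcongr
    _ = 1 / (x * log x) := div_div _ _ _

lemma log_log_add_one_le {x : ℝ} (hx : 1 < x) :
    log (log (x + 1)) ≤ log (log x) + 1 / (x * log x) := by
  have hlog : 0 < log x := log_pos hx
  have hlog_succ : 0 < log (x + 1) := log_pos (by linarith)
  calc log (log (x + 1)) ≤ log (log x + 1 / x) := by
        gcongr
        exact log_add_le_log_add_div (by positivity) (by positivity)
    _ ≤ log (log x) + 1 / x / log x := log_add_le_log_add_div hlog (by positivity)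
    _ = log (log x) + 1 / (x * log x) := by rw [div_div]

lemma log_log_add_one_sub_div_nonneg {x c : ℝ} (hx : 1 < x) (hc : c < log (log x)) :
    0 ≤ (log (log (x + 1)) - c) / (log (log x) - c) := by
  have hlog : 0 < log x := log_pos hx
  have mono : log (log x) ≤ log (log (x + 1)) := by gcongr; linarith
  exact div_nonneg (by linarith) (by linarith)

lemma log_log_add_one_sub_div_le {x c : ℝ} (hx : 1 < x) (hc : c < log (log x)) :
    (log (log (x + 1)) - c) / (log (log x) - c) ≤
      1 + 1 / (x * log x) / (log (log x) - c) := by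
  have hgap : 0 < log (log x) - c := sub_pos.mpr hc
  rw [div_le_iff₀ hgap, add_mul, div_mul_cancel₀ _ hgap.ne']
  linarith [log_log_add_one_le hx]

lemma pow_mul_pow_le_exp {p q u v : ℝ} (hp : 0 ≤ p) (hq : 0 ≤ q) (hpu : p ≤ 1 + u)
    (hqv : q ≤ 1 + v) (a b : ℕ) : p ^ a * q ^ b ≤ exp (a * u + b * v) := by
  have hp_exp : p ≤ exp u := by linarith [add_one_le_exp u]
  have hq_exp : q ≤ exp v := by linarith [add_one_le_exp v]
  calc p ^ a * q ^ b ≤ exp u ^ a * exp v ^ b := by gcongr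
    _ = exp (a * u + b * v) := by rw [exp_add, exp_nat_mul, exp_nat_mul]

lemma exp_exp_one_lt_eightyNine : exp (exp 1) < 89 :=
  calc exp (exp 1) < exp (3 : ℕ) := by
        gcongr
        exact_mod_cast exp_one_lt_three
    _ = exp 1 ^ 3 := (exp_one_pow 3).symm
    _ < 3 ^ 3 := by gcongr; exact exp_one_lt_three
    _ < 89 := by norm_num

theorem ineq_3_6_general {x : ℝ} {a b : ℕ} (hx : exp (exp 1) ≤ x) (hab : (a + b : ℝ) ≤ x) :
    (1 + log (1 + 1 / x) / log x) ^ a *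
        ((log (log (x + 1)) - 1 / 2) / (log (log x) - 1 / 2)) ^ b < log x := by
  have hx_one : 1 < x := (one_lt_exp_iff.mpr (exp_pos 1)).trans_le hx
  have hlog : exp 1 ≤ log x := (le_log_iff_exp_le (by linarith)).mpr hx
  have hlog_pos : 0 < log x := (exp_pos 1).trans_le hlog
  have hloglog : 1 ≤ log (log x) := (le_log_iff_exp_le hlog_pos).mpr hlog
  have hfirst_nonneg : 0 ≤ 1 + log (1 + 1 / x) / log x := by
    have : 0 ≤ log (1 + 1 / x) := log_nonneg (le_add_of_nonneg_right (by positivity))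
    positivity
  have hfirst : 1 + log (1 + 1 / x) / log x ≤ 1 + 2 / (x * log x) := by
    grw [log_one_add_inv_div_log_le hx_one]
    gcongr
    exact one_le_two
  have hsecond : (log (log (x + 1)) - 1 / 2) / (log (log x) - 1 / 2) ≤ 1 + 2 / (x * log x) :=
    calc _ ≤ 1 + 1 / (x * log x) / (log (log x) - 1 / 2) :=
          log_log_add_one_sub_div_le hx_one (by linarith)
      _ ≤ 1 + 1 / (x * log x) / (1 / 2) := by gcongr; linarith
      _ = 1 + 2 / (x * log x) := by ring
  calc _ ≤ exp (a * (2 / (x * log x)) + b * (2 / (x * log x))) :=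
        pow_mul_pow_le_exp hfirst_nonneg
          (log_log_add_one_sub_div_nonneg hx_one (by linarith)) hfirst hsecond a b
    _ = exp ((a + b) * (2 / (x * log x))) := by rw [add_mul]
    _ ≤ exp (x * (2 / (x * log x))) := by gcongr
    _ = exp (2 / log x) := by congr 1; field_simp
    _ < exp 1 := by
        gcongr
        rw [div_lt_one hlog_pos]
        linarith [exp_one_gt_two]
    _ ≤ log x := hlog

theorem ineq_3_6 (n i : ℕ) (hn : 89 ≤ n) (hi1 : 2 ≤ i) (hi2 : i ≤ n) :
    (1 + Real.log (1 + 1 / (n : ℝ)) / Real.log n) ^ (n - (i - 1)) *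
        ((Real.log (Real.log ((n : ℝ) + 1)) - 1 / 2) /
          (Real.log (Real.log n) - 1 / 2)) ^ (i - 1) <
      Real.log n :=
  ineq_3_6_general (exp_exp_one_lt_eightyNine.le.trans (mod_cast hn))
    (by exact_mod_cast (Nat.sub_add_cancel (by omega : i - 1 ≤ n)).le)
end

section
/- For every natural number n ≥ 89, (log log(n+1) − 1/2)^n < (n+1)·(log n)·(log log n − 1/2)^n + (log log n − 1/2)^{n+1}. (Inequality (3.7).) -/
open Real

/-!
Two applications of `log t ≤ t - 1` give `log log (n + 1) - log log n ≤ 1 / (n log n)`. Hence,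
with `a = log log n - 1 / 2`, replacing `log log n` by `log log (n + 1)` multiplies `a ^ n` by at
most `(1 + 1 / (n a log n)) ^ n ≤ exp (1 / (a log n))`. For `n ≥ 8` this factor is at most
`exp (8 / 3) < 18 ≤ (n + 1) log n`.
-/

lemma log_sub_log_le_sub_div {x y : ℝ} (hx : 0 < x) (hy : 0 < y) :
    log y - log x ≤ (y - x) / x := by
  rw [← log_div hy.ne' hx.ne', sub_div, div_self hx.ne']
  exact log_le_sub_one_of_pos (div_pos hy hx)

lemma log_log_add_one_sub_log_log_le {x : ℝ} (hx : 1 < x) :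
    log (log (x + 1)) - log (log x) ≤ 1 / (x * log x) := by
  have hx_pos : 0 < x := by linarith
  have hlog_pos : 0 < log x := log_pos hx
  calc
    log (log (x + 1)) - log (log x) ≤ (log (x + 1) - log x) / log x :=
      log_sub_log_le_sub_div hlog_pos (log_pos (by linarith))
    _ ≤ (x + 1 - x) / x / log x := by
      gcongr
      exact log_sub_log_le_sub_div hx_pos (by linarith)
    _ = 1 / (x * log x) := by rw [add_sub_cancel_left, div_div]

lemma pow_le_pow_mul_exp {a b : ℝ} (ha : 0 < a) (hb : 0 ≤ b) (n : ℕ) :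
    b ^ n ≤ a ^ n * exp (n * ((b - a) / a)) := by
  have hb_le : b ≤ a * exp ((b - a) / a) := by
    calc
      b = a * ((b - a) / a + 1) := by field_simp; ring
      _ ≤ a * exp ((b - a) / a) := by
        gcongr
        exact add_one_le_exp _
  calc
    b ^ n ≤ (a * exp ((b - a) / a)) ^ n := by gcongr
    _ = a ^ n * exp (n * ((b - a) / a)) := by rw [mul_pow, ← exp_nat_mul]

lemma log_log_add_one_sub_pow_le {n : ℕ} (hn : 1 < n) {c : ℝ} (hc : c < log (log n)) :
    (log (log ((n : ℝ) + 1)) - c) ^ n ≤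
      (log (log n) - c) ^ n * exp (1 / (log n * (log (log n) - c))) := by
  have hn_one : (1 : ℝ) < n := by exact_mod_cast hn
  have hlog_pos : 0 < log (n : ℝ) := log_pos hn_one
  have ha : 0 < log (log n) - c := sub_pos.mpr hc
  have hmono : log (log n) ≤ log (log ((n : ℝ) + 1)) := by gcongr; linarith
  have hexponent :
      n * ((log (log ((n : ℝ) + 1)) - c - (log (log n) - c)) / (log (log n) - c)) ≤
        1 / (log n * (log (log n) - c)) := by
    calc
      _ ≤ n * (1 / (n * log n) / (log (log n) - c)) := by
        rw [sub_sub_sub_cancel_right]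
        gcongr
        exact log_log_add_one_sub_log_log_le hn_one
      _ = 1 / (log n * (log (log n) - c)) := by field_simp
  calc
    _ ≤ _ := pow_le_pow_mul_exp ha (by linarith) n
    _ ≤ _ := by gcongr

lemma two_le_log_of_eight_le {x : ℝ} (hx : 8 ≤ x) : 2 ≤ log x := by
  have hlog_eight : log 8 = 3 * log 2 := by
    rw [show (8 : ℝ) = 2 ^ 3 by norm_num, log_pow, Nat.cast_ofNat]
  calc
    2 ≤ 3 * log 2 := by linarith [log_two_gt_d9]
    _ = log 8 := hlog_eight.symm
    _ ≤ log x := by gcongr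

lemma three_sixteenths_lt_log_sub_half {y : ℝ} (hy : 2 ≤ y) : 3 / 16 < log y - 1 / 2 := by
  have hlog : log 2 ≤ log y := by gcongr
  linarith [log_two_gt_d9]

lemma exp_eight_thirds_lt_eighteen : exp (8 / 3) < 18 := by
  refine lt_of_pow_lt_pow_left₀ 3 (by norm_num) ?_
  calc
    exp (8 / 3) ^ 3 = exp 1 ^ 8 := by rw [← exp_nat_mul, ← exp_nat_mul]; norm_num
    _ < 2.7182818286 ^ 8 := by gcongr; exact exp_one_lt_d9
    _ < 18 ^ 3 := by norm_num

theorem ineq_3_7_general (n : ℕ) (hn : 8 ≤ n) :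
    (log (log ((n : ℝ) + 1)) - 1 / 2) ^ n <
      ((n : ℝ) + 1) * log n * (log (log n) - 1 / 2) ^ n + (log (log n) - 1 / 2) ^ (n + 1) := by
  have hn_eight : (8 : ℝ) ≤ n := by exact_mod_cast hn
  have hlog : 2 ≤ log (n : ℝ) := two_le_log_of_eight_le hn_eight
  have ha : 3 / 16 < log (log n) - 1 / 2 := three_sixteenths_lt_log_sub_half hlog
  have ha_pos : 0 < log (log n) - 1 / 2 := by linarith
  have hexponent : 1 / (log n * (log (log n) - 1 / 2)) ≤ 8 / 3 := by
    calc
      _ ≤ 1 / (2 * (3 / 16) : ℝ) := by gcongr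
      _ = 8 / 3 := by norm_num
  calc
    (log (log ((n : ℝ) + 1)) - 1 / 2) ^ n
      ≤ (log (log n) - 1 / 2) ^ n * exp (1 / (log n * (log (log n) - 1 / 2))) :=
        log_log_add_one_sub_pow_le (by omega) (by linarith)
    _ ≤ (log (log n) - 1 / 2) ^ n * exp (8 / 3) := by gcongr
    _ ≤ (log (log n) - 1 / 2) ^ n * ((n + 1) * log n) := by
      gcongr
      nlinarith [exp_eight_thirds_lt_eighteen]
    _ = (n + 1) * log n * (log (log n) - 1 / 2) ^ n := mul_comm _ _
    _ < _ := lt_add_of_pos_right _ (by positivity)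

theorem ineq_3_7 (n : ℕ) (hn : 89 ≤ n) :
    (Real.log (Real.log ((n : ℝ) + 1)) - 1 / 2) ^ n <
      ((n : ℝ) + 1) * Real.log n * (Real.log (Real.log n) - 1 / 2) ^ n +
        (Real.log (Real.log n) - 1 / 2) ^ (n + 1) :=
  ineq_3_7_general n (by omega)
end
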